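/- Let p be a prime, F a free abelian group, F̂ the p-adic completion of F, and A a p-pure subgroup of F̂. Assume there is a finite set Y of elements of A, none of which is divisible by p in F̂, and a subset B ⊆ A with cardinality of B strictly greater than max(|F|, ℵ₀), such that for all x ≠ y in B there exist n ∈ ℕ and a ∈ Y with x − y − pⁿ·a ∈ pⁿ⁺¹·F̂. Then Ext_p(A, ℤ) ≠ 0; that is, there exists a group homomorphism h : A → ℤ/pℤ that has no lifting to ℤ. -/

import Mathlib

universe u

theorem aux_tf (p : ℕ) (hp : p.Prime) (F : Type u) [AddCommGroup F] [Module.Free ℤ F]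
    (x : AdicCompletion (Ideal.span {(p : ℤ)}) F) (hx : p • x = 0) : x = 0 := by
  ext n
  obtain ⟨f, hf⟩ := Submodule.Quotient.mk_surjective _ (x.val (n+1))
  have h1 : (Submodule.Quotient.mk (p • f) : F ⧸ ((Ideal.span {(p : ℤ)}) ^ (n+1) • ⊤ : Submodule ℤ F)) = 0 := by
    have := congrArg (fun y => AdicCompletion.eval (Ideal.span {(p : ℤ)}) F (n+1) y) hx
    simp only [map_nsmul, map_zero] at this
    rw [← this]
    change _ = p • x.val (n+1)
    rw [← hf]; rfl
  rw [Submodule.Quotient.mk_eq_zero, Ideal.span_singleton_pow,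
    Submodule.ideal_span_singleton_smul] at h1
  obtain ⟨g, -, hg⟩ := h1
  have h2 : f = ((p:ℤ)^n) • g := by
    have hp0 : (p : ℤ) ≠ 0 := by exact_mod_cast hp.ne_zero
    apply smul_right_injective F hp0
    change (p : ℤ) • f = (p : ℤ) • _
    rw [natCast_zsmul, ← hg, pow_succ']
    exact mul_smul (p : ℤ) _ g
  have h3 := x.property (Nat.le_succ n)
  change _ = (0 : AdicCompletion (Ideal.span {(p : ℤ)}) F).val n
  rw [← h3]
  change AdicCompletion.transitionMap _ _ _ (x.val (n+1)) = 0
  rw [← hf, h2]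
  change (Submodule.Quotient.mk (((p:ℤ)^n) • g) : F ⧸ ((Ideal.span {(p : ℤ)}) ^ n • ⊤ : Submodule ℤ F)) = 0
  rw [Submodule.Quotient.mk_eq_zero]
  exact Submodule.smul_mem_smul (Ideal.pow_mem_pow (Ideal.mem_span_singleton_self _) n) trivial

theorem aux_vec (p : ℕ) (hp : p.Prime) (V : Type u) [AddCommGroup V] (hV : ∀ v : V, p • v = 0)
    (v : V) (hv : v ≠ 0) : ∃ h : V →+ ZMod p, h v ≠ 0 := by
  have := Fact.mk hp
  let : Module (ZMod p) V := AddCommGroup.zmodModule (n := p) hV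
  have h1 : ¬ ∀ φ : Module.Dual (ZMod p) V, φ v = 0 := fun h =>
    hv ((Module.forall_dual_apply_eq_zero_iff (ZMod p) _).1 h)
  push Not at h1
  obtain ⟨φ, hφ⟩ := h1
  exact ⟨φ.toAddMonoidHom, hφ⟩

theorem aux_fun (p : ℕ) (hp : p.Prime) (A : Type u) [AddCommGroup A] (a : A)
    (ha : ¬ ∃ b : A, p • b = a) : ∃ h : A →+ ZMod p, h a ≠ 0 := by
  let R : AddSubgroup A := (nsmulAddMonoidHom (α := A) p).range
  have hne : (a : A ⧸ R) ≠ 0 := by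
    rw [Ne, QuotientAddGroup.eq_zero_iff]
    rintro ⟨b, hb⟩
    exact ha ⟨b, hb⟩
  obtain ⟨φ, hφ⟩ := aux_vec p hp (A ⧸ R) (by
    intro x
    obtain ⟨y, rfl⟩ := QuotientAddGroup.mk_surjective x
    rw [← QuotientAddGroup.mk_nsmul, QuotientAddGroup.eq_zero_iff]
    exact ⟨y, rfl⟩) a hne
  exact ⟨φ.comp (QuotientAddGroup.mk' R), hφ⟩

/-- Proposition `abs-prop` of the paper: if `A` is a `p`-pure subgroup of the `p`-adic
completion of a free abelian group `F`, `Y` is a finite set of elements of `A` none of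
which is divisible by `p` in the completion, and `B ⊆ A` has cardinality greater than
`max(|F|, ℵ₀)` such that any two distinct elements of `B` differ by an element of `Y`
at the first place they differ, then `Ext_p(A, ℤ) ≠ 0`: some homomorphism
`A → ℤ/pℤ` has no lifting to `ℤ`. -/
theorem ext_p_ne_zero (p : ℕ) (hp : p.Prime)
    (F : Type u) [AddCommGroup F] [Module.Free ℤ F]
    (A : AddSubgroup (AdicCompletion (Ideal.span {(p : ℤ)}) F))
    (hpure : ∀ a ∈ A, (∃ b ∈ A, p • b = a) ↔
      (∃ x : AdicCompletion (Ideal.span {(p : ℤ)}) F, p • x = a))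
    (Y : Set A) (hYfin : Y.Finite)
    (hYnd : ∀ a ∈ Y, ¬ ∃ x : AdicCompletion (Ideal.span {(p : ℤ)}) F,
      p • x = (a : AdicCompletion (Ideal.span {(p : ℤ)}) F))
    (B : Set A)
    (hBcard : max (Cardinal.mk F) Cardinal.aleph0 < Cardinal.mk B)
    (hB : ∀ x ∈ B, ∀ y ∈ B, x ≠ y → ∃ (n : ℕ) (a : A), a ∈ Y ∧
      ∃ z : AdicCompletion (Ideal.span {(p : ℤ)}) F,
        (x : AdicCompletion (Ideal.span {(p : ℤ)}) F) - y - p ^ n • (a : AdicCompletion (Ideal.span {(p : ℤ)}) F) = p ^ (n + 1) • z) :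
    ∃ h : A →+ ZMod p, ¬ ∃ g : A →+ ℤ, (Int.castAddHom (ZMod p)).comp g = h := by
  by_contra hcon
  push Not at hcon
  have hdiv : ∀ x : AdicCompletion (Ideal.span {(p : ℤ)}) F, p • x ∈ A → x ∈ A := by
    intro x hx
    obtain ⟨b, hb, hbx⟩ := (hpure _ hx).2 ⟨x, rfl⟩
    have : b - x = 0 := aux_tf p hp F _ (by rw [smul_sub, hbx, sub_self])
    rwa [← sub_eq_zero.1 this]
  have hdivn : ∀ (n : ℕ) (x : AdicCompletion (Ideal.span {(p : ℤ)}) F), p ^ n • x ∈ A → x ∈ A := by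
    intro n
    induction n with
    | zero => intro x hx; simpa using hx
    | succ k ih =>
      intro x hx
      rw [pow_succ, mul_smul] at hx
      exact hdiv _ (ih _ hx)
  have hex : ∀ a : Y, ∃ g : A →+ ℤ, ((g a : ℤ) : ZMod p) ≠ 0 := by
    intro a
    obtain ⟨h, hh⟩ := aux_fun p hp A a (by
      rintro ⟨b, hb⟩
      exact hYnd a a.2 ⟨b, by rw [← hb]; rfl⟩)
    obtain ⟨g, hg⟩ := hcon h
    refine ⟨g, ?_⟩
    rw [← hg] at hh
    exact hh
  choose g hg using hex
  have : Finite Y := hYfin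
  have hunc : ¬ Function.Injective (fun (b : B) (a : Y) => g a b) := by
    intro hinj
    have : Countable B := hinj.countable
    exact absurd (Cardinal.mk_le_aleph0 (α := B)) (not_le.2 ((le_max_right _ _).trans_lt hBcard))
  rw [Function.not_injective_iff] at hunc
  obtain ⟨x, y, hxy, hne⟩ := hunc
  obtain ⟨n, a, haY, z, hz⟩ := hB x x.2 y y.2 (fun h => hne (Subtype.ext h))
  have hzA : z ∈ A := by
    apply hdivn (n+1)
    rw [← hz]
    exact A.sub_mem (A.sub_mem x.1.2 y.1.2) (A.nsmul_mem a.2 _)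
  have hz' : (x : A) - y - p ^ n • a = p ^ (n+1) • (⟨z, hzA⟩ : A) := Subtype.ext hz
  have h1 := congrArg (g ⟨a, haY⟩) hz'
  have h2 : g ⟨a, haY⟩ x = g ⟨a, haY⟩ y := congrFun hxy ⟨a, haY⟩
  rw [map_sub, map_sub, h2, sub_self, map_nsmul, map_nsmul, zero_sub, nsmul_eq_mul, nsmul_eq_mul,
    pow_succ] at h1
  push_cast at h1
  have h3 : (p : ℤ) ^ n ≠ 0 := pow_ne_zero _ (by exact_mod_cast hp.ne_zero)
  have h4 : g ⟨a, haY⟩ a = - (p * g ⟨a, haY⟩ ⟨z, hzA⟩) := by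
    apply mul_left_cancel₀ h3
    linarith
  apply hg ⟨a, haY⟩
  change ((g ⟨a, haY⟩ a : ℤ) : ZMod p) = 0
  rw [h4]
  simp
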